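/- arXiv:2601.19848 — 2 statements merged into one kernel-verified Lean document; each statement's English description precedes it below -/
import Mathlib

section
/- Suppose k ≥ 1 and d ≥ 2, and let G ⊆ P_n be a stabilizer group with parameters [[n,k,d;3]] (dim G = n − k, d(G) = d, W(G) = 3) that contains a nonzero element of weight < 3. Then there exist m < n and a partition of Fin n into a set of size n − m and a set of size m such that, under the induced identification P_n ≅ P_{n−m} × P_m, G decomposes as a tensor product G₁ ⊗ G₂, where G₁ is an (n−m)-dimensional isotropic subspace (a [[n−m,0]] code, d(G₁) = ⊤) with W(G₁) ≤ 3, and G₂ is a stabilizer group with parameters [[m,k,d]] and W(G₂) = 3. -/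
open scoped Classical

noncomputable section

/-- Pauli strings modulo phase, indexed by a finite type. -/
abbrev PauliT (ι : Type) : Type := ι → ZMod 2 × ZMod 2

abbrev Pauli (n : ℕ) : Type := PauliT (Fin n)

variable {ι : Type} [Fintype ι]

/-- Weight of a Pauli string. -/
def wt (v : PauliT ι) : ℕ := (Finset.univ.filter fun i => v i ≠ 0).card

/-- Support of a Pauli string. -/
def suppF (v : PauliT ι) : Finset ι := Finset.univ.filter fun i => v i ≠ 0

/-- Symplectic form encoding commutation. -/
def sympl (u v : PauliT ι) : ZMod 2 :=
  ∑ i, ((u i).1 * (v i).2 + (u i).2 * (v i).1)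

/-- `G` is a stabilizer group (isotropic subspace). -/
def IsStabilizer (G : Submodule (ZMod 2) (PauliT ι)) : Prop :=
  ∀ u ∈ G, ∀ v ∈ G, sympl u v = 0

/-- Membership in the symplectic dual `G^⊥`. -/
def inDual (G : Submodule (ZMod 2) (PauliT ι)) (v : PauliT ι) : Prop :=
  ∀ g ∈ G, sympl v g = 0

/-- Distance: minimum weight of an element of `G^⊥ \ G`, `⊤` if none exists. -/
def distG (G : Submodule (ZMod 2) (PauliT ι)) : ℕ∞ :=
  sInf ((fun v => (wt v : ℕ∞)) '' {v | inDual G v ∧ v ∉ G})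

/-- `g` is an `𝔽₂`-basis (indexed family) of `G`. -/
def IsBasisFam {r : ℕ} (G : Submodule (ZMod 2) (PauliT ι)) (g : Fin r → PauliT ι) : Prop :=
  LinearIndependent (ZMod 2) g ∧ Submodule.span (ZMod 2) (Set.range g) = G

/-- The weight of a stabilizer group: optimal maximum generator weight over bases. -/
def Wgt (G : Submodule (ZMod 2) (PauliT ι)) : ℕ∞ :=
  ⨅ (r : ℕ) (g : Fin r → PauliT ι) (_ : IsBasisFam G g),
    Finset.univ.sup fun i => (wt (g i) : ℕ∞)

/-- Optimal weight over all `[[n,k,d]]` stabilizer codes. -/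
def Wopt (n k : ℕ) (d : ℕ∞) : ℕ∞ :=
  ⨅ (G : Submodule (ZMod 2) (Pauli n))
    (_ : IsStabilizer G ∧ Module.finrank (ZMod 2) ↥G = n - k ∧ distG G = d),
    Wgt G

/-- Weight enumerator: number of elements of `G` of weight `j`. -/
def Aj (G : Submodule (ZMod 2) (PauliT ι)) (j : ℕ) : ℕ :=
  Nat.card {g : PauliT ι // g ∈ G ∧ wt g = j}

/-- A weight-optimal generating set. -/
def IsWeightOptimalBasis {r : ℕ} (G : Submodule (ZMod 2) (PauliT ι))
    (g : Fin r → PauliT ι) : Prop :=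
  IsBasisFam G g ∧ Monotone (fun i => wt (g i)) ∧
    ∀ h : Fin r → PauliT ι, IsBasisFam G h → Monotone (fun i => wt (h i)) →
      ∀ i, wt (g i) ≤ wt (h i)

/-- Set of average generator weights over all bases of `G`. -/
def WavgSet (G : Submodule (ZMod 2) (PauliT ι)) : Set ℚ :=
  {x | ∃ (r : ℕ) (g : Fin r → PauliT ι), IsBasisFam G g ∧
        x = (∑ i, (wt (g i) : ℚ)) / (r : ℚ)}

/-- Splitting of Pauli strings along a bipartition given by a predicate. -/
def splitEquiv (p : ι → Prop) :
    PauliT ι ≃ₗ[ZMod 2] PauliT {x // p x} × PauliT {x // ¬ p x} :=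
  (LinearEquiv.funCongrLeft (ZMod 2) (ZMod 2 × ZMod 2) (Equiv.sumCompl p)).trans
    (LinearEquiv.sumArrowLequivProdArrow _ _ _ _)

/-- Tensor product of subspaces along a bipartition. -/
def tensorAlong (p : ι → Prop)
    (GA : Submodule (ZMod 2) (PauliT {x // p x}))
    (GB : Submodule (ZMod 2) (PauliT {x // ¬ p x})) :
    Submodule (ZMod 2) (PauliT ι) :=
  (GA.prod GB).comap (splitEquiv p).toLinearMap

/-- Decomposability as a tensor product over a nontrivial bipartition. -/
def Decomposable (G : Submodule (ZMod 2) (PauliT ι)) : Prop :=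
  ∃ p : ι → Prop, (∃ x, p x) ∧ (∃ x, ¬ p x) ∧
    ∃ (GA : Submodule (ZMod 2) (PauliT {x // p x}))
      (GB : Submodule (ZMod 2) (PauliT {x // ¬ p x})),
      G = tensorAlong p GA GB

/-- Identification of `Pauli (n₁+n₂)` with `Pauli n₁ × Pauli n₂`. -/
def pauliSumEquiv (n₁ n₂ : ℕ) :
    Pauli (n₁ + n₂) ≃ₗ[ZMod 2] Pauli n₁ × Pauli n₂ :=
  (LinearEquiv.funCongrLeft (ZMod 2) (ZMod 2 × ZMod 2) finSumFinEquiv).trans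
    (LinearEquiv.sumArrowLequivProdArrow _ _ _ _)

/-- Tensor product of stabilizer subspaces on `n₁` and `n₂` qubits. -/
def tensorFin {n₁ n₂ : ℕ} (G₁ : Submodule (ZMod 2) (Pauli n₁))
    (G₂ : Submodule (ZMod 2) (Pauli n₂)) :
    Submodule (ZMod 2) (Pauli (n₁ + n₂)) :=
  (G₁.prod G₂).comap (pauliSumEquiv n₁ n₂).toLinearMap

/-!
Write `G_A` for the subgroup of elements of `G` supported on a set `A` of qubits. It is isotropic on
`A`, so `dim G_A ≤ |A|`, and if equality holds then `G_A` is its own symplectic complement on `A`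
and splits off as a tensor factor.

To find such an `A ≠ ∅`, grow a set with `|A| ≤ dim G_A + 1` for which some `u ∈ G` has exactly one
qubit `r` of its support outside `A`; a nonzero element of weight at most two provides the start.
If the single-qubit operator `u_r` lies in `G`, then `{r}` splits off. Otherwise, since `d ≥ 2`, a
generator `u'` of weight at most three anticommutes with `u_r`. As `u'` commutes with `u`, it also
meets `A`, so at most one qubit of its support lies outside `A ∪ {r}`. If there is one, then
`A ∪ {r}` with `u'` is a larger set of the same kind; if there is none, then `u` and `u'` add two
dimensions to `G_A` and `A ∪ {r}` splits off.

A code of distance at least two generated in weight at most two is by induction completely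
exhausted by such factors, so it encodes nothing: this is why the remaining factor still has
weight three.
-/

/-- The symplectic form of a single qubit, of which `sympl` is the sum over all qubits. -/
def qubitSympl (a b : ZMod 2 × ZMod 2) : ZMod 2 := a.1 * b.2 + a.2 * b.1

lemma sympl_eq_sum (u v : PauliT ι) : sympl u v = ∑ i, qubitSympl (u i) (v i) := rfl

lemma qubitSympl_self (a : ZMod 2 × ZMod 2) : qubitSympl a a = 0 := by
  revert a; unfold qubitSympl; decide

lemma eq_zero_of_forall_qubitSympl_eq_zero {b : ZMod 2 × ZMod 2} (h : ∀ a, qubitSympl a b = 0) :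
    b = 0 := by
  revert b; unfold qubitSympl; decide

lemma sympl_comm (u v : PauliT ι) : sympl u v = sympl v u :=
  Finset.sum_congr rfl fun _ _ => by ring

lemma sympl_add_left (u v w : PauliT ι) : sympl (u + v) w = sympl u w + sympl v w := by
  simp only [sympl, ← Finset.sum_add_distrib, Pi.add_apply, Prod.fst_add, Prod.snd_add]
  exact Finset.sum_congr rfl fun _ _ => by ring

lemma sympl_smul_left (c : ZMod 2) (u v : PauliT ι) : sympl (c • u) v = c • sympl u v := by
  simp only [sympl, smul_eq_mul, Finset.mul_sum, Pi.smul_apply, Prod.smul_fst, Prod.smul_snd]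
  exact Finset.sum_congr rfl fun _ _ => by ring

/-- `sympl` as a bilinear form, giving access to Mathlib's theory of orthogonal complements. -/
def symplForm : LinearMap.BilinForm (ZMod 2) (PauliT ι) :=
  LinearMap.mk₂ (ZMod 2) sympl sympl_add_left sympl_smul_left
    (fun u v w => by simp only [sympl_comm u, sympl_add_left])
    (fun c u v => by simp only [sympl_comm u, sympl_smul_left])

lemma symplForm_apply (u v : PauliT ι) : symplForm u v = sympl u v := rfl

lemma sympl_zero_left (v : PauliT ι) : sympl 0 v = 0 := LinearMap.map_zero₂ symplForm v

lemma sympl_single_left (i : ι) (a : ZMod 2 × ZMod 2) (v : PauliT ι) :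
    sympl (Pi.single i a) v = qubitSympl a (v i) := by
  rw [sympl_eq_sum, Fintype.sum_eq_single i, Pi.single_eq_same]
  intro j hj
  simp [hj, qubitSympl]

lemma nondegenerate_symplForm : (symplForm (ι := ι)).Nondegenerate := by
  have hrefl : (symplForm (ι := ι)).IsRefl := fun u v h => (sympl_comm v u).trans h
  refine hrefl.nondegenerate_iff_separatingRight.2 fun v hv => funext fun i => ?_
  exact eq_zero_of_forall_qubitSympl_eq_zero fun a => by
    rw [← sympl_single_left, ← symplForm_apply, hv]

lemma mem_orthogonal_symplForm {G : Submodule (ZMod 2) (PauliT ι)} {v : PauliT ι} :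
    v ∈ symplForm.orthogonal G ↔ inDual G v :=
  forall₂_congr fun g _ => by rw [symplForm_apply, sympl_comm]

section Isotropic

variable {G : Submodule (ZMod 2) (PauliT ι)}

lemma finrank_orthogonal_symplForm (G : Submodule (ZMod 2) (PauliT ι)) :
    Module.finrank (ZMod 2) (symplForm.orthogonal G) =
      2 * Fintype.card ι - Module.finrank (ZMod 2) G := by
  rw [LinearMap.BilinForm.finrank_orthogonal nondegenerate_symplForm]
  simp [Module.finrank_pi_fintype, mul_comm]

lemma IsStabilizer.le_orthogonal (hG : IsStabilizer G) : G ≤ symplForm.orthogonal G :=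
  fun u hu => mem_orthogonal_symplForm.2 (hG u hu)

lemma IsStabilizer.finrank_le_card (hG : IsStabilizer G) :
    Module.finrank (ZMod 2) G ≤ Fintype.card ι := by
  have hle := Submodule.finrank_mono hG.le_orthogonal
  rw [finrank_orthogonal_symplForm] at hle
  omega

lemma IsStabilizer.mem_of_inDual (hG : IsStabilizer G)
    (hcard : Fintype.card ι ≤ Module.finrank (ZMod 2) G) {v : PauliT ι} (hv : inDual G v) :
    v ∈ G := by
  have heq : G = symplForm.orthogonal G := Submodule.eq_of_le_of_finrank_le hG.le_orthogonal <| by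
    rw [finrank_orthogonal_symplForm]
    omega
  rw [heq]
  exact mem_orthogonal_symplForm.2 hv

lemma IsStabilizer.distG_eq_top (hG : IsStabilizer G)
    (hcard : Fintype.card ι ≤ Module.finrank (ZMod 2) G) : distG G = ⊤ := by
  have hempty : {v | inDual G v ∧ v ∉ G} = ∅ :=
    Set.eq_empty_iff_forall_notMem.2 fun v hv => hv.2 (hG.mem_of_inDual hcard hv.1)
  rw [distG, hempty, Set.image_empty, sInf_empty]

end Isotropic

lemma mem_suppF {v : PauliT ι} {i : ι} : i ∈ suppF v ↔ v i ≠ 0 := by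
  simp [suppF]

lemma card_suppF (v : PauliT ι) : (suppF v).card = wt v := rfl

lemma suppF_single_subset (i : ι) (a : ZMod 2 × ZMod 2) :
    suppF (Pi.single i a : PauliT ι) ⊆ {i} := by
  intro j
  rw [mem_suppF, Finset.mem_singleton]
  exact not_imp_comm.1 fun hji => by simp [hji]

lemma wt_single_le_one (i : ι) (a : ZMod 2 × ZMod 2) : wt (Pi.single i a : PauliT ι) ≤ 1 :=
  Finset.card_le_card (suppF_single_subset i a)

lemma distG_le_wt {G : Submodule (ZMod 2) (PauliT ι)} {v : PauliT ι} (hv : inDual G v)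
    (hvG : v ∉ G) : distG G ≤ wt v :=
  sInf_le ⟨v, ⟨hv, hvG⟩, rfl⟩

section Weight

variable {G : Submodule (ZMod 2) (PauliT ι)}

lemma Wgt_le_of_span_eq {S : Set (PauliT ι)} {w : ℕ∞} (hS : Submodule.span (ZMod 2) S = G)
    (hw : ∀ s ∈ S, (wt s : ℕ∞) ≤ w) : Wgt G ≤ w := by
  obtain ⟨g, hgS, hspan, hindep⟩ := Submodule.exists_fun_fin_finrank_span_eq (ZMod 2) S
  exact iInf_le_of_le _ <| iInf_le_of_le g <| iInf_le_of_le ⟨hindep, hspan.trans hS⟩ <|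
    Finset.sup_le fun i _ => hw _ (hgS i)

lemma exists_span_eq_of_Wgt_le {w : ℕ} (hW : Wgt G ≤ w) :
    ∃ S : Set (PauliT ι), Submodule.span (ZMod 2) S = G ∧ ∀ s ∈ S, wt s ≤ w := by
  have hlt : Wgt G < (w + 1 : ℕ) := hW.trans_lt (by exact_mod_cast w.lt_succ_self)
  simp only [Wgt, iInf_lt_iff] at hlt
  obtain ⟨r, g, hg, hsup⟩ := hlt
  refine ⟨Set.range g, hg.2, Set.forall_mem_range.2 fun i => Nat.le_of_lt_succ ?_⟩
  exact_mod_cast (Finset.le_sup (f := fun i => (wt (g i) : ℕ∞)) (Finset.mem_univ i)).trans_lt hsup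

lemma Wgt_map_le {κ : Type} [Fintype κ] (f : PauliT ι →ₗ[ZMod 2] PauliT κ)
    (hf : ∀ v, wt (f v) ≤ wt v) : Wgt (G.map f) ≤ Wgt G := by
  refine le_iInf fun r => le_iInf fun g => le_iInf fun hg => ?_
  refine Wgt_le_of_span_eq (S := f '' Set.range g) (by rw [Submodule.span_image, hg.2]) ?_
  rintro _ ⟨_, ⟨i, rfl⟩, rfl⟩
  exact (Nat.cast_le.2 (hf _)).trans
    (Finset.le_sup (f := fun i => (wt (g i) : ℕ∞)) (Finset.mem_univ i))

lemma exists_anticommuting_wt_le (hd : 2 ≤ distG G) {w : ℕ} (hW : Wgt G ≤ w) {i : ι}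
    {a : ZMod 2 × ZMod 2} (ha : Pi.single i a ∉ G) :
    ∃ g ∈ G, wt g ≤ w ∧ qubitSympl a (g i) ≠ 0 := by
  obtain ⟨S, hS, hw⟩ := exists_span_eq_of_Wgt_le hW
  by_contra! hcomm
  have hker : G ≤ LinearMap.ker (symplForm (Pi.single i a)) := by
    rw [← hS, Submodule.span_le]
    intro s hs
    rw [SetLike.mem_coe, LinearMap.mem_ker, symplForm_apply, sympl_single_left]
    exact hcomm s (hS ▸ Submodule.subset_span hs) (hw s hs)
  have hdual : inDual G (Pi.single i a) := fun g hg => hker hg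
  have hwt : 2 ≤ wt (Pi.single i a) := by exact_mod_cast hd.trans (distG_le_wt hdual ha)
  exact absurd (hwt.trans (wt_single_le_one i a)) (by norm_num)

end Weight

section Tensor

variable {p : ι → Prop} {G₁ : Submodule (ZMod 2) (PauliT {x // p x})}
  {G₂ : Submodule (ZMod 2) (PauliT {x // ¬ p x})}

omit [Fintype ι] in
lemma mem_tensorAlong {v : PauliT ι} :
    v ∈ tensorAlong p G₁ G₂ ↔ (splitEquiv p v).1 ∈ G₁ ∧ (splitEquiv p v).2 ∈ G₂ :=
  Iff.rfl

omit [Fintype ι] in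
lemma splitEquiv_symm_mem_tensorAlong {a : PauliT {x // p x}} {b : PauliT {x // ¬ p x}} :
    (splitEquiv p).symm (a, b) ∈ tensorAlong p G₁ G₂ ↔ a ∈ G₁ ∧ b ∈ G₂ := by
  rw [mem_tensorAlong, LinearEquiv.apply_symm_apply]

omit [Fintype ι] in
lemma map_splitEquiv_tensorAlong :
    (tensorAlong p G₁ G₂).map (splitEquiv p).toLinearMap = G₁.prod G₂ :=
  Submodule.map_comap_eq_of_surjective (splitEquiv p).surjective _

omit [Fintype ι] in
lemma finrank_tensorAlong [Finite ι] : Module.finrank (ZMod 2) (tensorAlong p G₁ G₂) =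
    Module.finrank (ZMod 2) G₁ + Module.finrank (ZMod 2) G₂ := by
  have hinj : Function.Injective (G₁.subtype.prodMap G₂.subtype) :=
    G₁.subtype_injective.prodMap G₂.subtype_injective
  rw [tensorAlong, Submodule.comap_equiv_eq_map_symm, LinearEquiv.finrank_map_eq,
    ← Module.finrank_prod, ← LinearMap.finrank_range_of_inj hinj, LinearMap.range_prodMap,
    Submodule.range_subtype, Submodule.range_subtype]

lemma sympl_splitEquiv (p : ι → Prop) [Fintype {x // p x}] [Fintype {x // ¬ p x}]
    (u v : PauliT ι) : sympl u v =
      sympl (splitEquiv p u).1 (splitEquiv p v).1 +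
        sympl (splitEquiv p u).2 (splitEquiv p v).2 := by
  rw [sympl_eq_sum, ← Equiv.sum_comp (Equiv.sumCompl p), Fintype.sum_sum_type]
  rfl

lemma wt_splitEquiv (p : ι → Prop) [Fintype {x // p x}] [Fintype {x // ¬ p x}] (v : PauliT ι) :
    wt v = wt (splitEquiv p v).1 + wt (splitEquiv p v).2 := by
  simp only [wt, Finset.card_filter]
  rw [← Equiv.sum_comp (Equiv.sumCompl p), Fintype.sum_sum_type]
  rfl

lemma sympl_splitEquiv_symm_left [Fintype {x // p x}] (a : PauliT {x // p x})
    (v : PauliT ι) : sympl ((splitEquiv p).symm (a, 0)) v = sympl a (splitEquiv p v).1 := by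
  rw [sympl_splitEquiv p, LinearEquiv.apply_symm_apply, sympl_zero_left, add_zero]

lemma sympl_splitEquiv_symm_right [Fintype {x // ¬ p x}] (b : PauliT {x // ¬ p x})
    (v : PauliT ι) : sympl ((splitEquiv p).symm (0, b)) v = sympl b (splitEquiv p v).2 := by
  rw [sympl_splitEquiv p, LinearEquiv.apply_symm_apply, sympl_zero_left, zero_add]

lemma Wgt_left_le_Wgt_tensorAlong [Fintype {x // p x}] : Wgt G₁ ≤ Wgt (tensorAlong p G₁ G₂) := by
  have hmap :
      (tensorAlong p G₁ G₂).map (LinearMap.fst _ _ _ ∘ₗ (splitEquiv p).toLinearMap) = G₁ := by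
    rw [Submodule.map_comp, map_splitEquiv_tensorAlong, Submodule.prod_map_fst]
  conv_lhs => rw [← hmap]
  exact Wgt_map_le _ fun v => (Nat.le_add_right _ _).trans_eq (wt_splitEquiv p v).symm

lemma Wgt_right_le_Wgt_tensorAlong [Fintype {x // ¬ p x}] : Wgt G₂ ≤ Wgt (tensorAlong p G₁ G₂) := by
  have hmap :
      (tensorAlong p G₁ G₂).map (LinearMap.snd _ _ _ ∘ₗ (splitEquiv p).toLinearMap) = G₂ := by
    rw [Submodule.map_comp, map_splitEquiv_tensorAlong, Submodule.prod_map_snd]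
  conv_lhs => rw [← hmap]
  exact Wgt_map_le _ fun v => (Nat.le_add_left _ _).trans_eq (wt_splitEquiv p v).symm

variable [Fintype {x // p x}] [Fintype {x // ¬ p x}]

lemma isStabilizer_tensorAlong :
    IsStabilizer (tensorAlong p G₁ G₂) ↔ IsStabilizer G₁ ∧ IsStabilizer G₂ := by
  refine ⟨fun h => ⟨fun a ha a' ha' => ?_, fun b hb b' hb' => ?_⟩, fun ⟨h₁, h₂⟩ u hu v hv => ?_⟩
  · simpa [sympl_splitEquiv_symm_left] using
      h _ (splitEquiv_symm_mem_tensorAlong.2 ⟨ha, zero_mem G₂⟩)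
        _ (splitEquiv_symm_mem_tensorAlong.2 ⟨ha', zero_mem G₂⟩)
  · simpa [sympl_splitEquiv_symm_right] using
      h _ (splitEquiv_symm_mem_tensorAlong.2 ⟨zero_mem G₁, hb⟩)
        _ (splitEquiv_symm_mem_tensorAlong.2 ⟨zero_mem G₁, hb'⟩)
  · rw [mem_tensorAlong] at hu hv
    rw [sympl_splitEquiv p, h₁ _ hu.1 _ hv.1, h₂ _ hu.2 _ hv.2, add_zero]

lemma inDual_tensorAlong {v : PauliT ι} : inDual (tensorAlong p G₁ G₂) v ↔
    inDual G₁ (splitEquiv p v).1 ∧ inDual G₂ (splitEquiv p v).2 := by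
  refine ⟨fun h => ⟨fun a ha => ?_, fun b hb => ?_⟩, fun ⟨h₁, h₂⟩ g hg => ?_⟩
  · rw [sympl_comm, ← sympl_splitEquiv_symm_left, sympl_comm]
    exact h _ (splitEquiv_symm_mem_tensorAlong.2 ⟨ha, zero_mem G₂⟩)
  · rw [sympl_comm, ← sympl_splitEquiv_symm_right, sympl_comm]
    exact h _ (splitEquiv_symm_mem_tensorAlong.2 ⟨zero_mem G₁, hb⟩)
  · rw [mem_tensorAlong] at hg
    rw [sympl_splitEquiv p, h₁ _ hg.1, h₂ _ hg.2, add_zero]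

lemma wt_splitEquiv_symm (a : PauliT {x // p x}) (b : PauliT {x // ¬ p x}) :
    wt ((splitEquiv p).symm (a, b)) = wt a + wt b := by
  rw [wt_splitEquiv p, LinearEquiv.apply_symm_apply]

lemma wt_zero : wt (0 : PauliT ι) = 0 := by
  simp [wt]

lemma inDual_zero (G : Submodule (ZMod 2) (PauliT ι)) : inDual G 0 :=
  fun g _ => sympl_zero_left g

lemma distG_tensorAlong : distG (tensorAlong p G₁ G₂) = min (distG G₁) (distG G₂) := by
  refine le_antisymm (le_min (le_sInf ?_) (le_sInf ?_)) (le_sInf ?_)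
  · rintro _ ⟨a, ⟨hdual, hmem⟩, rfl⟩
    refine (distG_le_wt (v := (splitEquiv p).symm (a, 0)) ?_ ?_).trans_eq ?_
    · simpa [inDual_tensorAlong] using ⟨hdual, inDual_zero G₂⟩
    · simpa [splitEquiv_symm_mem_tensorAlong] using hmem
    · simp [wt_splitEquiv_symm, wt_zero]
  · rintro _ ⟨b, ⟨hdual, hmem⟩, rfl⟩
    refine (distG_le_wt (v := (splitEquiv p).symm (0, b)) ?_ ?_).trans_eq ?_
    · simpa [inDual_tensorAlong] using ⟨inDual_zero G₁, hdual⟩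
    · simpa [splitEquiv_symm_mem_tensorAlong] using hmem
    · simp [wt_splitEquiv_symm, wt_zero]
  · rintro _ ⟨v, ⟨hdual, hmem⟩, rfl⟩
    have hwt := wt_splitEquiv p v
    rw [inDual_tensorAlong] at hdual
    rw [mem_tensorAlong, not_and_or] at hmem
    rcases hmem with hmem | hmem
    · exact (min_le_left _ _).trans <| (distG_le_wt hdual.1 hmem).trans <| Nat.cast_le.2 (by omega)
    · exact (min_le_right _ _).trans <| (distG_le_wt hdual.2 hmem).trans <| Nat.cast_le.2 (by omega)

end Tensor

/-- The subgroup `G_A` of the elements of `G` supported on `A`, acting on all qubits of `ι`. -/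
def subgroupOn (G : Submodule (ZMod 2) (PauliT ι)) (A : Finset ι) :
    Submodule (ZMod 2) (PauliT ι) :=
  G ⊓ Submodule.pi (↑A)ᶜ fun _ => ⊥

section SubgroupOn

variable {G : Submodule (ZMod 2) (PauliT ι)} {A : Finset ι} {r : ι} {u u' : PauliT ι}

section

omit [Fintype ι]

lemma subgroupOn_mono {B : Finset ι} (hAB : A ⊆ B) : subgroupOn G A ≤ subgroupOn G B :=
  fun _ hv => ⟨hv.1, fun i hi => hv.2 i (mt (@hAB i) hi)⟩

lemma apply_eq_zero_of_mem_subgroupOn (hr : r ∉ A) {v : PauliT ι} (hv : v ∈ subgroupOn G A) :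
    v r = 0 :=
  hv.2 r hr

variable [Finite ι]

lemma finrank_subgroupOn_insert (hr : r ∉ A) (hu : u ∈ subgroupOn G (insert r A)) (hur : u r ≠ 0) :
    Module.finrank (ZMod 2) (subgroupOn G A) + 1 ≤
      Module.finrank (ZMod 2) (subgroupOn G (insert r A)) :=
  Submodule.finrank_lt_finrank_of_lt <| SetLike.lt_iff_le_and_exists.2
    ⟨subgroupOn_mono (Finset.subset_insert r A), u, hu,
      fun huA => hur (apply_eq_zero_of_mem_subgroupOn hr huA)⟩

lemma finrank_subgroupOn_insert_of_anticommuting (hr : r ∉ A)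
    (hu : u ∈ subgroupOn G (insert r A)) (hu' : u' ∈ subgroupOn G (insert r A))
    (hanti : qubitSympl (u r) (u' r) ≠ 0) :
    Module.finrank (ZMod 2) (subgroupOn G A) + 2 ≤
      Module.finrank (ZMod 2) (subgroupOn G (insert r A)) := by
  have := Fintype.ofFinite ι
  let M := subgroupOn G (insert r A) ⊓ LinearMap.ker (symplForm (Pi.single r (u r)))
  have hM {v : PauliT ι} : v ∈ M ↔ v ∈ subgroupOn G (insert r A) ∧ qubitSympl (u r) (v r) = 0 := by
    rw [Submodule.mem_inf, LinearMap.mem_ker, symplForm_apply, sympl_single_left]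
  have hlt : subgroupOn G A < M := by
    refine SetLike.lt_iff_le_and_exists.2 ⟨fun v hv => hM.2 ⟨?_, ?_⟩, u, ?_, fun huA => hanti ?_⟩
    · exact subgroupOn_mono (Finset.subset_insert r A) hv
    · simp [apply_eq_zero_of_mem_subgroupOn hr hv, qubitSympl]
    · exact hM.2 ⟨hu, qubitSympl_self _⟩
    · simp [apply_eq_zero_of_mem_subgroupOn hr huA, qubitSympl]
  have hlt' : M < subgroupOn G (insert r A) :=
    SetLike.lt_iff_le_and_exists.2 ⟨inf_le_left, u', hu', fun h => hanti (hM.1 h).2⟩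
  have := Submodule.finrank_lt_finrank_of_lt hlt
  have := Submodule.finrank_lt_finrank_of_lt hlt'
  omega

lemma one_le_finrank_subgroupOn_singleton {v : PauliT ι} (hv : v ∈ subgroupOn G {r})
    (hvr : v r ≠ 0) : 1 ≤ Module.finrank (ZMod 2) (subgroupOn G {r}) := by
  rw [← insert_empty_eq] at hv ⊢
  exact (Nat.le_add_left 1 _).trans (finrank_subgroupOn_insert (Finset.notMem_empty r) hv hvr)

end

lemma mem_subgroupOn {v : PauliT ι} : v ∈ subgroupOn G A ↔ v ∈ G ∧ suppF v ⊆ A := by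
  simp [subgroupOn, Submodule.mem_pi, Finset.subset_iff, mem_suppF, not_imp_comm]

lemma IsStabilizer.exists_mem_suppF_of_anticommuting (hG : IsStabilizer G)
    (hu : u ∈ subgroupOn G (insert r A)) (hu' : u' ∈ G) (hanti : qubitSympl (u r) (u' r) ≠ 0) :
    ∃ a ∈ A, a ∈ suppF u' := by
  by_contra! hdisj
  refine hanti ?_
  rw [← hG u (mem_subgroupOn.1 hu).1 u' hu', sympl_eq_sum, Fintype.sum_eq_single r]
  intro i hir
  by_cases hiA : i ∈ A
  · simp [not_not.1 (mt mem_suppF.2 (hdisj i hiA)), qubitSympl]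
  · have hui : u i = 0 := apply_eq_zero_of_mem_subgroupOn (by simp [hir, hiA]) hu
    simp [hui, qubitSympl]

lemma IsStabilizer.exists_eq_tensorAlong (hG : IsStabilizer G)
    (hA : A.card ≤ Module.finrank (ZMod 2) (subgroupOn G A)) :
    ∃ (G₁ : Submodule (ZMod 2) (PauliT {x // x ∈ A}))
      (G₂ : Submodule (ZMod 2) (PauliT {x // ¬ x ∈ A})),
      G = tensorAlong (fun x => x ∈ A) G₁ G₂ ∧ Module.finrank (ZMod 2) G₁ = A.card := by
  let e := splitEquiv fun x => x ∈ A
  let G₁ := G.comap (e.symm.toLinearMap ∘ₗ LinearMap.inl _ _ _)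
  let G₂ := G.comap (e.symm.toLinearMap ∘ₗ LinearMap.inr _ _ _)
  have hsum (v : PauliT ι) : e.symm ((e v).1, 0) + e.symm (0, (e v).2) = v := by
    rw [← map_add]
    simp
  have hG₁ : IsStabilizer G₁ := fun a ha b hb => by
    simpa [e, sympl_splitEquiv_symm_left] using hG _ ha _ hb
  have hle : subgroupOn G A ≤ G₁.map (e.symm.toLinearMap ∘ₗ LinearMap.inl _ _ _) := by
    intro v hv
    have hv₂ : (e v).2 = 0 := funext fun x => apply_eq_zero_of_mem_subgroupOn x.2 hv
    have hv₁ : e.symm ((e v).1, 0) = v := by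
      have hv_sum := hsum v
      rwa [hv₂, Prod.mk_zero_zero, map_zero, add_zero] at hv_sum
    exact ⟨(e v).1, by simpa [G₁, hv₁] using (mem_subgroupOn.1 hv).1, hv₁⟩
  have hcard : Fintype.card {x // x ∈ A} = A.card := Fintype.card_coe A
  have hrank : A.card ≤ Module.finrank (ZMod 2) G₁ :=
    hA.trans ((Submodule.finrank_mono hle).trans (Submodule.finrank_map_le _ _))
  refine ⟨G₁, G₂, ?_, le_antisymm (hcard ▸ hG₁.finrank_le_card) hrank⟩
  ext v
  rw [mem_tensorAlong]
  constructor
  · intro hv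
    have hv₁ : (e v).1 ∈ G₁ := hG₁.mem_of_inDual (hcard ▸ hrank) fun a ha => by
      rw [sympl_comm, ← sympl_splitEquiv_symm_left]
      exact hG _ ha v hv
    exact ⟨hv₁, (G.add_mem_iff_right hv₁).1 ((hsum v).symm ▸ hv)⟩
  · rintro ⟨hv₁, hv₂⟩
    exact hsum v ▸ G.add_mem hv₁ hv₂

end SubgroupOn

lemma subset_or_exists_subset_insert {α : Type*} {S T B : Finset α} (hTS : T ⊆ S) (hTB : T ⊆ B)
    (hcard : S.card ≤ T.card + 1) : S ⊆ B ∨ ∃ s ∈ S, s ∉ B ∧ S ⊆ insert s B := by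
  refine or_iff_not_imp_left.2 fun hSB => ?_
  obtain ⟨s, hsS, hsB⟩ := Finset.not_subset.1 hSB
  have hinsert : insert s T = S := Finset.eq_of_subset_of_card_le
    (Finset.insert_subset hsS hTS)
    (by rwa [Finset.card_insert_of_notMem fun hsT => hsB (hTB hsT)])
  exact ⟨s, hsS, hsB, hinsert ▸ Finset.insert_subset_insert s hTB⟩

/-- `A` can be grown in the search for a tensor factor of `G`: the subgroup of `G` on `A` is at most
one dimension short of being Lagrangian, and some element of `G` leaves `A` at exactly one qubit. -/
def IsGrowable (G : Submodule (ZMod 2) (PauliT ι)) (A : Finset ι) : Prop :=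
  A.card ≤ Module.finrank (ZMod 2) (subgroupOn G A) + 1 ∧
    ∃ r ∉ A, ∃ u ∈ subgroupOn G (insert r A), u r ≠ 0

section Growth

variable {G : Submodule (ZMod 2) (PauliT ι)}

lemma IsGrowable.exists_card_le_finrank_or_insert (hG : IsStabilizer G) (hd : 2 ≤ distG G)
    (hW : Wgt G ≤ 3) {A : Finset ι} (hA : IsGrowable G A) :
    (∃ B : Finset ι, B.Nonempty ∧ B.card ≤ Module.finrank (ZMod 2) (subgroupOn G B)) ∨
      ∃ r ∉ A, IsGrowable G (insert r A) := by
  obtain ⟨hcard, r, hr, u, hu, hur⟩ := hA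
  by_cases hsingle : Pi.single r (u r) ∈ G
  · exact .inl ⟨{r}, Finset.singleton_nonempty r, one_le_finrank_subgroupOn_singleton
      (mem_subgroupOn.2 ⟨hsingle, suppF_single_subset r _⟩) (by simpa using hur)⟩
  obtain ⟨u', hu', hwt, hanti⟩ := exists_anticommuting_wt_le hd hW hsingle
  obtain ⟨a, haA, hau'⟩ := hG.exists_mem_suppF_of_anticommuting hu hu' hanti
  have hru' : r ∈ suppF u' := mem_suppF.2 fun h => hanti (by simp [h, qubitSympl])
  have hra : r ≠ a := fun h => hr (h ▸ haA)
  have hcard_insert : (insert r A).card = A.card + 1 := Finset.card_insert_of_notMem hr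
  rcases subset_or_exists_subset_insert (S := suppF u') (T := {r, a}) (B := insert r A)
    (by simp [Finset.insert_subset_iff, hru', hau']) (by simp [Finset.insert_subset_iff, haA])
    (by rwa [Finset.card_pair hra]) with hsub | ⟨s, hs, hsA, hsub⟩
  · have := finrank_subgroupOn_insert_of_anticommuting hr hu (mem_subgroupOn.2 ⟨hu', hsub⟩) hanti
    exact .inl ⟨insert r A, Finset.insert_nonempty r A, by omega⟩
  · have := finrank_subgroupOn_insert hr hu hur
    exact .inr ⟨r, hr, by omega, s, hsA, u', mem_subgroupOn.2 ⟨hu', hsub⟩, mem_suppF.1 hs⟩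

lemma IsGrowable.exists_card_le_finrank (hG : IsStabilizer G) (hd : 2 ≤ distG G)
    (hW : Wgt G ≤ 3) {A : Finset ι} (hA : IsGrowable G A) :
    ∃ B : Finset ι, B.Nonempty ∧ B.card ≤ Module.finrank (ZMod 2) (subgroupOn G B) := by
  obtain ⟨M, hM⟩ := (Set.toFinite {A | IsGrowable G A}).exists_maximal ⟨A, hA⟩
  refine (hM.prop.exists_card_le_finrank_or_insert hG hd hW).resolve_right ?_
  rintro ⟨r, hr, hgrow⟩
  exact hr (hM.le_of_ge hgrow (Finset.subset_insert r M) (Finset.mem_insert_self r M))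

lemma exists_card_le_finrank_subgroupOn (hG : IsStabilizer G) (hd : 2 ≤ distG G)
    (hW : Wgt G ≤ 3) (hlow : ∃ g ∈ G, g ≠ 0 ∧ wt g < 3) :
    ∃ B : Finset ι, B.Nonempty ∧ B.card ≤ Module.finrank (ZMod 2) (subgroupOn G B) := by
  obtain ⟨g, hg, hg0, hwt⟩ := hlow
  obtain ⟨i, hi⟩ := Function.ne_iff.1 hg0
  rcases subset_or_exists_subset_insert (S := suppF g) (T := {i}) (B := {i})
    (Finset.singleton_subset_iff.2 (mem_suppF.2 hi)) subset_rfl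
    (by rw [card_suppF, Finset.card_singleton]; omega) with hsub | ⟨s, hs, hsi, hsub⟩
  · exact ⟨{i}, Finset.singleton_nonempty i,
      one_le_finrank_subgroupOn_singleton (mem_subgroupOn.2 ⟨hg, hsub⟩) hi⟩
  · have hgrow : IsGrowable G {i} :=
      ⟨by simp, s, hsi, g, mem_subgroupOn.2 ⟨hg, hsub⟩, mem_suppF.1 hs⟩
    exact hgrow.exists_card_le_finrank hG hd hW

end Growth

lemma exists_eq_tensorAlong_of_Wgt_le_three {G : Submodule (ZMod 2) (PauliT ι)}
    (hG : IsStabilizer G) (hd : 2 ≤ distG G) (hW : Wgt G ≤ 3)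
    (hlow : ∃ g ∈ G, g ≠ 0 ∧ wt g < 3) :
    ∃ A : Finset ι, A.Nonempty ∧
      ∃ (G₁ : Submodule (ZMod 2) (PauliT {x // x ∈ A}))
        (G₂ : Submodule (ZMod 2) (PauliT {x // ¬ x ∈ A})),
        G = tensorAlong (fun x => x ∈ A) G₁ G₂ ∧ Module.finrank (ZMod 2) G₁ = A.card := by
  obtain ⟨A, hne, hA⟩ := exists_card_le_finrank_subgroupOn hG hd hW hlow
  exact ⟨A, hne, hG.exists_eq_tensorAlong hA⟩

lemma exists_ne_zero_wt_le [Nonempty ι] {G : Submodule (ZMod 2) (PauliT ι)} (hd : 2 ≤ distG G)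
    {w : ℕ} (hw : 1 ≤ w) (hW : Wgt G ≤ w) : ∃ g ∈ G, g ≠ 0 ∧ wt g ≤ w := by
  obtain ⟨i⟩ := ‹Nonempty ι›
  by_cases hX : (Pi.single i (1, 0) : PauliT ι) ∈ G
  · exact ⟨_, hX, by simp [Pi.single_eq_zero_iff], (wt_single_le_one i _).trans hw⟩
  · obtain ⟨g, hg, hgw, hanti⟩ := exists_anticommuting_wt_le hd hW hX
    exact ⟨g, hg, fun h => hanti (by simp [h, qubitSympl]), hgw⟩

theorem finrank_eq_card_of_Wgt_le_two {G : Submodule (ZMod 2) (PauliT ι)} (hG : IsStabilizer G)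
    (hd : 2 ≤ distG G) (hW : Wgt G ≤ 2) : Module.finrank (ZMod 2) G = Fintype.card ι := by
  induction hn : Fintype.card ι using Nat.strong_induction_on generalizing ι with
  | _ n ih =>
  subst hn
  cases isEmpty_or_nonempty ι
  · have hle := hG.finrank_le_card
    rw [Fintype.card_eq_zero] at hle ⊢
    exact Nat.le_zero.1 hle
  obtain ⟨g, hg, hg0, hwt⟩ := exists_ne_zero_wt_le hd one_le_two hW
  obtain ⟨A, hne, G₁, G₂, rfl, hrank⟩ := exists_eq_tensorAlong_of_Wgt_le_three hG hd
    (hW.trans (by norm_num)) ⟨g, hg, hg0, Nat.lt_succ_of_le hwt⟩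
  have hcompl : Fintype.card {x // ¬ x ∈ A} = Fintype.card ι - A.card := by
    simp [Fintype.card_subtype_compl]
  have hpos := hne.card_pos
  have hA := A.card_le_univ
  rw [distG_tensorAlong, le_min_iff] at hd
  rw [finrank_tensorAlong, hrank, ih _ (by omega) (isStabilizer_tensorAlong.1 hG).2 hd.2
    (Wgt_right_le_Wgt_tensorAlong.trans hW) rfl]
  omega

/-- an `[[n,k,d;3]]` code (`k ≥ 1`, `d ≥ 2`) containing a nonzero element of
weight `< 3` factorizes as `[[n-m,0]] ⊗ [[m,k,d;3]]` for some `m < n`. -/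
theorem clean_weight_three_codes (n k : ℕ) (d : ℕ∞) (hk : 1 ≤ k) (hd : 2 ≤ d)
    (G : Submodule (ZMod 2) (Pauli n)) (hG : IsStabilizer G)
    (hdim : Module.finrank (ZMod 2) ↥G = n - k) (hdist : distG G = d)
    (hW : Wgt G = 3)
    (hlow : ∃ g ∈ G, g ≠ 0 ∧ wt g < 3) :
    ∃ m : ℕ, m < n ∧
      ∃ A : Finset (Fin n), A.card = n - m ∧
        ∃ (G₁ : Submodule (ZMod 2) (PauliT {x : Fin n // x ∈ A}))
          (G₂ : Submodule (ZMod 2) (PauliT {x : Fin n // ¬ x ∈ A})),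
          G = tensorAlong (fun x => x ∈ A) G₁ G₂ ∧
          IsStabilizer G₁ ∧ Module.finrank (ZMod 2) ↥G₁ = n - m ∧
          distG G₁ = ⊤ ∧ Wgt G₁ ≤ 3 ∧
          IsStabilizer G₂ ∧ Module.finrank (ZMod 2) ↥G₂ = m - k ∧
          distG G₂ = d ∧ Wgt G₂ = 3 := by
  subst hdist
  obtain ⟨A, hne, G₁, G₂, rfl, hrank⟩ := exists_eq_tensorAlong_of_Wgt_le_three hG hd hW.le hlow
  obtain ⟨hG₁, hG₂⟩ := isStabilizer_tensorAlong.1 hG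
  have hpos := hne.card_pos
  have hA := A.card_le_univ
  have hcompl : Fintype.card {x // ¬ x ∈ A} = n - A.card := by
    simp [Fintype.card_subtype_compl]
  rw [finrank_tensorAlong, hrank] at hdim
  have hdist₁ : distG G₁ = ⊤ := hG₁.distG_eq_top (by rw [hrank, Fintype.card_coe])
  have hdist₂ : distG G₂ = distG (tensorAlong (fun x => x ∈ A) G₁ G₂) := by
    rw [distG_tensorAlong, hdist₁, min_eq_right le_top]
  have hWgt₂ : Wgt G₂ = 3 := by
    refine le_antisymm (Wgt_right_le_Wgt_tensorAlong.trans hW.le) (not_lt.1 fun hlt => ?_)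
    have := finrank_eq_card_of_Wgt_le_two hG₂ (hdist₂ ▸ hd) (Order.le_of_lt_add_one hlt)
    omega
  exact ⟨n - A.card, by omega, A, by omega, G₁, G₂, rfl, hG₁, by omega, hdist₁,
    Wgt_left_le_Wgt_tensorAlong.trans hW.le, hG₂, by omega, hdist₂, hWgt₂⟩

end
end

section
/- Let G ⊆ P_n be an indecomposable stabilizer group of dimension n − k ≥ 1 with W(G) ≤ w, where w ≥ 2. Then the number of elements g ∈ G with 1 ≤ wt(g) ≤ min(2w − 2, n) is at least 2(n − k) − 1; equivalently, Σ_{i=1}^{min(2w−2, n)} A_i(G) ≥ (n − k) + (n − k − 1). -/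
open scoped Classical

noncomputable section

variable {ι : Type} [Fintype ι]

/-!
Take a basis `g` of `G` by elements of weight at most `w`, and join two basis elements by an edge
when their supports meet. A union of components of this graph splits `G` into tensor factors, so
indecomposability makes the graph connected and it has at least `dim G - 1` edges. The weights of
`u`, `v` and `u + v` add up to `ω(u, v)` modulo 2, so for commuting `u` and `v` the defect
`wt u + wt v - wt (u + v)` is even; when the supports meet it is positive, hence at least 2.
Thus every edge contributes an element `g i + g j` of weight at most `2 * w - 2`, and by linear
independence these elements and the `g i` are nonzero and distinct.
-/

open Function (support)

section Weight

theorem wt_eq_hammingNorm (v : PauliT ι) : wt v = hammingNorm v := rfl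

theorem wt_pos_iff {v : PauliT ι} : 0 < wt v ↔ v ≠ 0 := by
  rw [wt_eq_hammingNorm, hammingNorm_pos_iff]

theorem wt_le_card (v : PauliT ι) : wt v ≤ Fintype.card ι := by
  rw [wt_eq_hammingNorm]
  exact hammingNorm_le_card_fintype

theorem natCast_wt_add_wt_add_wt_add (u v : PauliT ι) :
    ((wt u + wt v + wt (u + v) : ℕ) : ZMod 2) = sympl u v := by
  have single_qubit : ∀ a b : ZMod 2 × ZMod 2,
      (if a ≠ 0 then 1 else 0) + (if b ≠ 0 then 1 else 0) + (if a + b ≠ 0 then 1 else 0) =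
        a.1 * b.2 + a.2 * b.1 := by
    decide
  simp only [wt, sympl, Finset.card_filter, ← Finset.sum_add_distrib, Nat.cast_sum, Nat.cast_add,
    Nat.cast_ite, Nat.cast_one, Nat.cast_zero, Pi.add_apply, single_qubit]

theorem suppF_add_subset (u v : PauliT ι) : suppF (u + v) ⊆ suppF u ∪ suppF v := by
  intro x
  simp only [suppF, Finset.mem_union, Finset.mem_filter_univ, Pi.add_apply]
  contrapose!
  rintro ⟨hu, hv⟩
  rw [hu, hv, add_zero]

theorem coe_suppF (v : PauliT ι) : (suppF v : Set ι) = support v := by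
  ext x
  simp [suppF]

theorem wt_add_lt {u v : PauliT ι} (huv : ¬ Disjoint (support u) (support v)) :
    wt (u + v) < wt u + wt v := by
  rw [← coe_suppF, ← coe_suppF, Finset.disjoint_coe] at huv
  calc
    wt (u + v) ≤ (suppF u ∪ suppF v).card := Finset.card_le_card (suppF_add_subset u v)
    _ < (suppF u ∪ suppF v).card + (suppF u ∩ suppF v).card :=
      Nat.lt_add_of_pos_right
        (Finset.card_pos.mpr (Finset.not_disjoint_iff_nonempty_inter.mp huv))
    _ = wt u + wt v := Finset.card_union_add_card_inter _ _

theorem wt_add_add_two_le {u v : PauliT ι} (hcomm : sympl u v = 0)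
    (huv : ¬ Disjoint (support u) (support v)) : wt (u + v) + 2 ≤ wt u + wt v := by
  have hlt : wt (u + v) < wt u + wt v := wt_add_lt huv
  have heven : 2 ∣ wt u + wt v + wt (u + v) := by
    rw [← ZMod.natCast_eq_zero_iff, natCast_wt_add_wt_add_wt_add, hcomm]
  omega

end Weight

section Overlap

variable {α κ M : Type*} [Zero M]

/-- The graph on the index set of a family of strings over the alphabet `M` in which two distinct
indices are adjacent when both strings are nonzero at some common position. -/
def overlapGraph (g : κ → α → M) : SimpleGraph κ where
  Adj i j := i ≠ j ∧ ¬ Disjoint (support (g i)) (support (g j))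
  symm := ⟨fun _ _ h => ⟨h.1.symm, fun hd => h.2 hd.symm⟩⟩
  loopless := ⟨fun _ h => h.1 rfl⟩

theorem disjoint_support_of_not_reachable {g : κ → α → M} {i j : κ}
    (hij : ¬ (overlapGraph g).Reachable i j) : Disjoint (support (g i)) (support (g j)) := by
  by_contra hmeet
  have hne : i ≠ j := fun h => hij (h ▸ .refl i)
  exact hij (SimpleGraph.Adj.reachable ⟨hne, hmeet⟩)

end Overlap

section Decomposition

variable {α κ : Type}

theorem decomposable_of_indicator_mem {G : Submodule (ZMod 2) (PauliT α)} {s : Set α}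
    (hs : s.Nonempty) (hsc : sᶜ.Nonempty) (hG : ∀ v ∈ G, s.indicator v ∈ G) :
    Decomposable G := by
  refine ⟨(· ∈ s), hs, hsc, (G.map (splitEquiv (· ∈ s)).toLinearMap).map (LinearMap.fst _ _ _),
    (G.map (splitEquiv (· ∈ s)).toLinearMap).map (LinearMap.snd _ _ _), le_antisymm ?_ ?_⟩
  · exact fun v hv => ⟨⟨_, ⟨v, hv, rfl⟩, rfl⟩, ⟨_, ⟨v, hv, rfl⟩, rfl⟩⟩
  · rintro v ⟨⟨_, ⟨a, ha, rfl⟩, hav⟩, ⟨_, ⟨b, hb, rfl⟩, hbv⟩⟩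
    have agree_on : ∀ x, x ∈ s → a x = v x := fun x hx => congrFun hav ⟨x, hx⟩
    have agree_off : ∀ x, x ∉ s → b x = v x := fun x hx => congrFun hbv ⟨x, hx⟩
    have glue : v = s.indicator a + (b - s.indicator b) := by
      funext x
      by_cases hx : x ∈ s
      · simp [hx, agree_on x hx]
      · simp [hx, agree_off x hx]
    rw [glue]
    exact G.add_mem (hG a ha) (G.sub_mem hb (hG b hb))

theorem decomposable_span {S : Set (PauliT α)} {s : Set α} (hs : s.Nonempty) (hsc : sᶜ.Nonempty)
    (hS : ∀ v ∈ S, support v ⊆ s ∨ Disjoint (support v) s) :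
    Decomposable (Submodule.span (ZMod 2) S) := by
  refine decomposable_of_indicator_mem hs hsc fun v hv => ?_
  induction hv using Submodule.span_induction with
  | mem v hv =>
    rcases hS v hv with hsub | hdisj
    · rw [Set.indicator_eq_self.mpr hsub]
      exact Submodule.subset_span hv
    · rw [Set.indicator_eq_zero'.mpr hdisj]
      exact zero_mem _
  | zero => simp
  | add u v _ _ hu hv =>
    rw [Set.indicator_add']
    exact add_mem hu hv
  | smul c v _ hv =>
    have indicator_smul : s.indicator (c • v) = c • s.indicator v :=
      Set.indicator_const_smul s c v
    rw [indicator_smul]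
    exact Submodule.smul_mem _ c hv

theorem overlapGraph_preconnected {g : κ → PauliT α} (hne : ∀ i, g i ≠ 0)
    (hindec : ¬ Decomposable (Submodule.span (ZMod 2) (Set.range g))) :
    (overlapGraph g).Preconnected := by
  intro i j
  by_contra hij
  let s : Set α := ⋃ m ∈ {m | (overlapGraph g).Reachable i m}, support (g m)
  have support_subset : ∀ l, (overlapGraph g).Reachable i l → support (g l) ⊆ s :=
    fun l hl => Set.subset_biUnion_of_mem (u := fun m => support (g m)) hl
  have support_disjoint : ∀ l, ¬ (overlapGraph g).Reachable i l → Disjoint (support (g l)) s :=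
    fun l hl => Set.disjoint_iUnion₂_right.mpr fun m hm =>
      disjoint_support_of_not_reachable fun hlm => hl (hm.trans hlm.symm)
  refine hindec (decomposable_span (s := s) ?_ ?_ ?_)
  · exact (Function.support_nonempty_iff.mpr (hne i)).mono (support_subset i (.refl i))
  · exact (Function.support_nonempty_iff.mpr (hne j)).mono
      (support_disjoint j hij).subset_compl_right
  · rintro _ ⟨l, rfl⟩
    exact (em _).imp (support_subset l) (support_disjoint l)

end Decomposition

section Cells

variable {κ : Type*}

/-- The set of vertices of a cell of `H`, where `H` is regarded as a one-dimensional complex whose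
cells are its vertices and its edges. -/
def cellVertices (H : SimpleGraph κ) : κ ⊕ H.edgeSet → Finset κ :=
  Sum.elim (fun i => {i}) fun e => (e : Sym2 κ).toFinset

theorem cellVertices_nonempty {H : SimpleGraph κ} (c : κ ⊕ H.edgeSet) :
    (cellVertices H c).Nonempty := by
  rcases c with i | e
  · exact Finset.singleton_nonempty i
  · exact Finset.nonempty_iff_ne_empty.mpr (e : Sym2 κ).toFinset_ne_empty

theorem sym2_toFinset_injective : Function.Injective (Sym2.toFinset : Sym2 κ → Finset κ) :=
  fun a b hab => Sym2.ext fun x => by rw [← Sym2.mem_toFinset, hab, Sym2.mem_toFinset]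

theorem cellVertices_injective (H : SimpleGraph κ) : Function.Injective (cellVertices H) := by
  refine Finset.singleton_injective.sumElim
    (sym2_toFinset_injective.comp Subtype.val_injective) fun i e hie => ?_
  have hcard := congrArg Finset.card hie
  rw [Finset.card_singleton,
    Sym2.card_toFinset_of_not_isDiag _ (H.not_isDiag_of_mem_edgeSet e.2)] at hcard
  omega

theorem finsetSum_injective_of_linearIndependent {R M : Type*} [Semiring R] [Nontrivial R]
    [AddCommMonoid M] [Module R M] {g : κ → M} (hg : LinearIndependent R g) :
    Function.Injective fun s : Finset κ => ∑ i ∈ s, g i := by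
  intro s t hst
  have sum_eq_linearCombination : ∀ s : Finset κ,
      ∑ i ∈ s, g i = Finsupp.linearCombination R g (Finsupp.indicator s fun _ _ => 1) := by
    intro s
    simp [Finsupp.indicator_eq_sum_single]
  simp only [sum_eq_linearCombination] at hst
  ext i
  have coeff_eq := DFunLike.congr_fun (hg hst) i
  by_cases hs : i ∈ s <;> by_cases ht : i ∈ t <;> simp_all

end Cells

section Counting

theorem exists_isBasisFam_wt_le {G : Submodule (ZMod 2) (PauliT ι)} {w : ℕ}
    (hW : Wgt G ≤ (w : ℕ∞)) :
    ∃ (r : ℕ) (g : Fin r → PauliT ι), IsBasisFam G g ∧ ∀ i, wt (g i) ≤ w := by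
  have hlt : Wgt G < ((w + 1 : ℕ) : ℕ∞) := hW.trans_lt (by exact_mod_cast Nat.lt_succ_self w)
  simp only [Wgt, iInf_lt_iff] at hlt
  obtain ⟨r, g, hg, hsup⟩ := hlt
  refine ⟨r, g, hg, fun i => Nat.lt_succ_iff.mp ?_⟩
  exact_mod_cast (Finset.le_sup (f := fun i => (wt (g i) : ℕ∞)) (Finset.mem_univ i)).trans_lt hsup

theorem sum_Aj_eq_card (G : Submodule (ZMod 2) (PauliT ι)) (s : Finset ℕ) :
    ∑ i ∈ s, Aj G i = Nat.card {v : PauliT ι // v ∈ G ∧ wt v ∈ s} := by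
  simp only [Aj, Nat.card_eq_fintype_card, Fintype.card_subtype]
  rw [Finset.card_eq_sum_card_fiberwise (f := wt) (t := s)
    fun v hv => (Finset.mem_filter.mp hv).2.2]
  refine Finset.sum_congr rfl fun i hi => congrArg Finset.card ?_
  ext v
  simp only [Finset.mem_filter, Finset.mem_univ, true_and]
  exact ⟨fun ⟨hv, hi'⟩ => ⟨⟨hv, hi' ▸ hi⟩, hi'⟩, fun ⟨⟨hv, _⟩, hi'⟩ => ⟨hv, hi'⟩⟩


variable {κ : Type*} {g : κ → PauliT ι} {w : ℕ}

theorem wt_sum_cellVertices_overlapGraph_le (hcomm : ∀ i j, sympl (g i) (g j) = 0) (hw : 2 ≤ w)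
    (hgw : ∀ i, wt (g i) ≤ w) (c : κ ⊕ (overlapGraph g).edgeSet) :
    wt (∑ i ∈ cellVertices (overlapGraph g) c, g i) ≤ 2 * w - 2 := by
  rcases c with i | ⟨⟨i, j⟩, hij⟩
  · have hi := hgw i
    simp only [cellVertices, Sum.elim_inl, Finset.sum_singleton]
    omega
  · obtain ⟨hne, hmeet⟩ : i ≠ j ∧ ¬ Disjoint (support (g i)) (support (g j)) := hij
    have hsum : ∑ l ∈ s(i, j).toFinset, g l = g i + g j := by
      rw [Sym2.toFinset_mk_eq, Finset.sum_pair hne]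
    have hdefect : wt (g i + g j) + 2 ≤ wt (g i) + wt (g j) :=
      wt_add_add_two_le (hcomm i j) hmeet
    have hi := hgw i
    have hj := hgw j
    change wt (∑ l ∈ s(i, j).toFinset, g l) ≤ 2 * w - 2
    rw [hsum]
    omega

theorem card_add_card_edgeSet_overlapGraph_le [Finite κ] {G : Submodule (ZMod 2) (PauliT ι)}
    (hG : IsStabilizer G) (hgG : ∀ i, g i ∈ G) (hg : LinearIndependent (ZMod 2) g) (hw : 2 ≤ w)
    (hgw : ∀ i, wt (g i) ≤ w) :
    Nat.card κ + Nat.card (overlapGraph g).edgeSet ≤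
      ∑ i ∈ Finset.Icc 1 (min (2 * w - 2) (Fintype.card ι)), Aj G i := by
  have hinj := finsetSum_injective_of_linearIndependent hg
  have hne : ∀ c, ∑ i ∈ cellVertices (overlapGraph g) c, g i ≠ 0 := fun c hc =>
    (cellVertices_nonempty c).ne_empty (hinj (hc.trans Finset.sum_empty.symm))
  have hle := wt_sum_cellVertices_overlapGraph_le (fun i j => hG _ (hgG i) _ (hgG j)) hw hgw
  let f (c : κ ⊕ (overlapGraph g).edgeSet) :
      {v : PauliT ι // v ∈ G ∧ wt v ∈ Finset.Icc 1 (min (2 * w - 2) (Fintype.card ι))} :=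
    ⟨∑ i ∈ cellVertices (overlapGraph g) c, g i, G.sum_mem fun i _ => hgG i,
      Finset.mem_Icc.mpr ⟨wt_pos_iff.mpr (hne c), le_min (hle c) (wt_le_card _)⟩⟩
  have f_injective : Function.Injective f := fun c d hcd =>
    cellVertices_injective _ (hinj (congrArg Subtype.val hcd))
  rw [sum_Aj_eq_card, ← Nat.card_sum]
  exact Nat.card_le_card_of_injective f f_injective

end Counting

theorem overlap_constraint_general {G : Submodule (ZMod 2) (PauliT ι)} (hG : IsStabilizer G)
    (hindec : ¬ Decomposable G) {w : ℕ} (hw : 2 ≤ w) (hW : Wgt G ≤ (w : ℕ∞)) :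
    2 * Module.finrank (ZMod 2) G ≤
      ∑ i ∈ Finset.Icc 1 (min (2 * w - 2) (Fintype.card ι)), Aj G i + 1 := by
  obtain ⟨r, g, ⟨hg, rfl⟩, hgw⟩ := exists_isBasisFam_wt_le hW
  have hrank : Module.finrank (ZMod 2) (Submodule.span (ZMod 2) (Set.range g)) = r := by
    rw [finrank_span_eq_card hg, Fintype.card_fin]
  have hedges : r ≤ Nat.card (overlapGraph g).edgeSet + 1 := by
    rcases r.eq_zero_or_pos with rfl | hr
    · exact Nat.zero_le _
    · have : Nonempty (Fin r) := Fin.pos_iff_nonempty.mp hr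
      have hconn : (overlapGraph g).Connected := ⟨overlapGraph_preconnected hg.ne_zero hindec⟩
      simpa using hconn.card_vert_le_card_edgeSet_add_one
  have hcount := card_add_card_edgeSet_overlapGraph_le hG
    (fun i => Submodule.subset_span (Set.mem_range_self i)) hg hw hgw
  rw [Nat.card_fin] at hcount
  omega

/-- overlap constraint: an indecomposable stabilizer group of dimension
`n - k ≥ 1` with `W(G) ≤ w`, `w ≥ 2`, has at least `(n-k) + (n-k-1)` elements of weight
between `1` and `min(2w-2, n)`. -/
theorem overlap_constraint (n k w : ℕ) (hw : 2 ≤ w) (hr : 1 ≤ n - k)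
    (G : Submodule (ZMod 2) (Pauli n)) (hG : IsStabilizer G)
    (hdim : Module.finrank (ZMod 2) ↥G = n - k)
    (hindec : ¬ Decomposable G) (hWgt : Wgt G ≤ (w : ℕ∞)) :
    (n - k) + (n - k - 1) ≤ ∑ i ∈ Finset.Icc 1 (min (2 * w - 2) n), Aj G i := by
  have h := overlap_constraint_general hG hindec hw hWgt
  rw [hdim, Fintype.card_fin] at h
  omega

end
end
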